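/- arXiv:2410.04767 — 2 statements merged into one kernel-verified Lean document; each statement's English description precedes it below -/
import Mathlib

section
/- For every real number q with 0 < q < 1, ∑_{k∈ℤ} (-1)^k q^{(2k² + k)/3} = ∏_{n=1}^∞ (1 - q^{4n/3})(1 - q^{(4n-1)/3})(1 - q^{(4n-3)/3}). -/
/-!
Jacobi's triple product
`∑_k z ^ k² y ^ k = ∏_n (1 - z ^ (2n+2)) (1 + z ^ (2n+1) y) (1 + z ^ (2n+1) y⁻¹)`,
applied with `z = q ^ (2/3)` and `y = -q ^ (1/3)`, is the limit of its finite form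
`∏_{i<m} (1 + z ^ (2i+1) y) ∏_{i<n} (1 + z ^ (2i+1) y⁻¹) = ∑_k [m+n, n+k] z ^ k² y ^ k`,
where the Gaussian binomials have base `z²`. For `n = 0` this is the `q`-binomial theorem, and the
step from `n` to `n + 1` is Pascal's rule. As `m = n → ∞` the Gaussian binomials stay bounded and
tend to `1 / ∏ (1 - z ^ (2n+2))`, so the sums converge by dominated convergence.
-/

open Filter Finset Topology

section Pochhammer

variable {R : Type*} [CommRing R]

/-- The finite `q`-Pochhammer symbol `(a; q)_n = (1 - a) (1 - a q) ⋯ (1 - a q ^ (n - 1))`, whose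
limits in `n` are the infinite products of the triple product identity. -/
def qPochhammer (a q : R) (n : ℕ) : R := ∏ i ∈ range n, (1 - a * q ^ i)

lemma qPochhammer_zero (a q : R) : qPochhammer a q 0 = 1 := prod_range_zero _

lemma qPochhammer_succ (a q : R) (n : ℕ) :
    qPochhammer a q (n + 1) = qPochhammer a q n * (1 - a * q ^ n) := prod_range_succ _ n

lemma qPochhammer_succ' (a q : R) (n : ℕ) :
    qPochhammer a q (n + 1) = (1 - a) * qPochhammer (a * q) q n := by
  simp only [qPochhammer, prod_range_succ', pow_zero, mul_one, pow_succ', mul_assoc]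
  rw [mul_comm]

end Pochhammer

section GaussBinom

/-- The Gaussian binomial coefficient `[n, k]_q`. It is defined by Pascal's rule rather than as a
quotient of `q`-factorials, so that it makes sense for every `q` and vanishes for `n < k`. -/
def gaussBinom {R : Type*} [CommSemiring R] (q : R) : ℕ → ℕ → R
  | _, 0 => 1
  | 0, _ + 1 => 0
  | n + 1, k + 1 => gaussBinom q n k + q ^ (k + 1) * gaussBinom q n (k + 1)

section CommSemiring

variable {R : Type*} [CommSemiring R]

lemma gaussBinom_zero_right (q : R) (n : ℕ) : gaussBinom q n 0 = 1 := by
  cases n <;> rfl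

lemma gaussBinom_succ_succ (q : R) (n k : ℕ) :
    gaussBinom q (n + 1) (k + 1) = gaussBinom q n k + q ^ (k + 1) * gaussBinom q n (k + 1) := rfl

lemma gaussBinom_eq_zero_of_lt (q : R) {n k : ℕ} (h : n < k) : gaussBinom q n k = 0 := by
  induction n generalizing k with
  | zero => obtain ⟨k, rfl⟩ := Nat.exists_eq_succ_of_ne_zero h.ne'; rfl
  | succ n ih =>
    obtain ⟨k, rfl⟩ := Nat.exists_eq_succ_of_ne_zero (Nat.ne_zero_of_lt h)
    rw [gaussBinom_succ_succ, ih (by lia), ih (by lia), mul_zero, add_zero]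

lemma gaussBinom_self (q : R) (n : ℕ) : gaussBinom q n n = 1 := by
  induction n with
  | zero => rfl
  | succ n ih =>
    rw [gaussBinom_succ_succ, ih, gaussBinom_eq_zero_of_lt q n.lt_succ_self, mul_zero, add_zero]

lemma sum_gaussBinom_succ_mul (q : R) (n : ℕ) (f : ℕ → R) :
    ∑ k ∈ range (n + 2), gaussBinom q (n + 1) k * f k =
      ∑ k ∈ range (n + 1), gaussBinom q n k * (f (k + 1) + q ^ k * f k) := by
  have shift : ∑ k ∈ range (n + 1), gaussBinom q n (k + 1) * (q ^ (k + 1) * f (k + 1)) + f 0 =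
      ∑ k ∈ range (n + 1), gaussBinom q n k * (q ^ k * f k) := by
    rw [sum_range_succ, gaussBinom_eq_zero_of_lt q n.lt_succ_self, sum_range_succ' _ n,
      gaussBinom_zero_right]
    ring
  calc ∑ k ∈ range (n + 2), gaussBinom q (n + 1) k * f k
    _ = ∑ k ∈ range (n + 1), (gaussBinom q n k * f (k + 1) +
          gaussBinom q n (k + 1) * (q ^ (k + 1) * f (k + 1))) + f 0 := by
      rw [sum_range_succ', gaussBinom_zero_right, one_mul]
      congr 1
      refine sum_congr rfl fun k _ ↦ ?_
      rw [gaussBinom_succ_succ]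
      ring
    _ = ∑ k ∈ range (n + 1), gaussBinom q n k * (f (k + 1) + q ^ k * f k) := by
      simp only [mul_add, sum_add_distrib, add_assoc, shift]

end CommSemiring

lemma qPochhammer_mul_gaussBinom {R : Type*} [CommRing R] (q : R) (m n : ℕ) :
    qPochhammer q q m * qPochhammer q q n * gaussBinom q (m + n) m = qPochhammer q q (m + n) := by
  induction m generalizing n with
  | zero => rw [zero_add, gaussBinom_zero_right, qPochhammer_zero, one_mul, mul_one]
  | succ m ihm =>
    induction n with
    | zero => rw [add_zero, gaussBinom_self, qPochhammer_zero, mul_one, mul_one]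
    | succ n ihn =>
      have ihm' := ihm (n + 1)
      rw [← add_assoc m n 1] at ihm'
      rw [add_right_comm m 1 n] at ihn
      rw [show m + 1 + (n + 1) = m + n + 1 + 1 by ring, gaussBinom_succ_succ,
        qPochhammer_succ q q (m + n + 1)]
      rw [qPochhammer_succ] at ihm' ihn ⊢
      rw [qPochhammer_succ q q n]
      linear_combination (1 - q * q ^ m) * ihm' + q ^ (m + 1) * (1 - q * q ^ n) * ihn

/-- The `q`-binomial theorem. -/
lemma qPochhammer_neg_eq_sum_gaussBinom {R : Type*} [CommRing R] (a q : R) (n : ℕ) :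
    qPochhammer (-a) q n = ∑ k ∈ range (n + 1), gaussBinom q n k * (q ^ k.choose 2 * a ^ k) := by
  induction n generalizing a with
  | zero => simp [qPochhammer_zero, gaussBinom_zero_right]
  | succ n ih =>
    rw [sum_gaussBinom_succ_mul, qPochhammer_succ', ← neg_mul_eq_neg_mul, ih, mul_sum]
    refine sum_congr rfl fun k _ ↦ ?_
    rw [Nat.choose_succ_succ' k 1, Nat.choose_one_right]
    ring

lemma qPochhammer_mul_qPochhammer_eq_sum_gaussBinom {K : Type*} [Field K] {z y : K}
    (hz : z ≠ 0) (hy : y ≠ 0) (m n : ℕ) :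
    qPochhammer (-(z * y)) (z ^ 2) m * qPochhammer (-(z * y⁻¹)) (z ^ 2) n =
      ∑ k ∈ range (m + n + 1),
        gaussBinom (z ^ 2) (m + n) k * (z ^ ((k - n : ℤ) ^ 2) * y ^ (k - n : ℤ)) := by
  induction n with
  | zero =>
    rw [qPochhammer_zero, mul_one, add_zero, qPochhammer_neg_eq_sum_gaussBinom]
    refine sum_congr rfl fun k _ ↦ ?_
    have exponent : 2 * k.choose 2 + k = k ^ 2 := by
      rw [Nat.choose_two_right, Nat.mul_div_cancel' (Nat.even_mul_pred_self k).two_dvd,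
        Nat.mul_sub_one, Nat.sub_add_cancel (Nat.le_mul_self k), sq]
    rw [Nat.cast_zero, sub_zero, zpow_natCast, ← Nat.cast_pow, zpow_natCast, ← exponent]
    ring
  | succ n ih =>
    rw [← add_assoc, sum_gaussBinom_succ_mul, qPochhammer_succ, ← mul_assoc, ih, sum_mul]
    refine sum_congr rfl fun k _ ↦ ?_
    have y_shift : y ^ (k - (n + 1 : ℕ) : ℤ) = y ^ (k - n : ℤ) * y⁻¹ := by
      rw [← zpow_sub_one₀ hy]; push_cast; ring_nf
    have z_shift : (z ^ 2) ^ k * z ^ ((k - (n + 1 : ℕ) : ℤ) ^ 2) =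
        z ^ ((k - n : ℤ) ^ 2) * (z * (z ^ 2) ^ n) := by
      rw [← pow_mul, ← pow_mul, ← pow_succ', ← zpow_natCast z (2 * k),
        ← zpow_natCast z (2 * n + 1), ← zpow_add₀ hz, ← zpow_add₀ hz]
      push_cast; ring_nf
    rw [← mul_assoc ((z ^ 2) ^ k), z_shift, y_shift,
      show ((k + 1 : ℕ) - (n + 1 : ℕ) : ℤ) = k - n by push_cast; ring]
    ring

end GaussBinom

section Limits

variable {𝕜 : Type*} [NormedField 𝕜]

lemma one_sub_mul_pow_self_ne_zero {q : 𝕜} (hq : ‖q‖ < 1) (n : ℕ) : 1 - q * q ^ n ≠ 0 := by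
  rw [← pow_succ', sub_ne_zero]
  refine fun h ↦ (pow_lt_one₀ (norm_nonneg q) hq n.succ_ne_zero).ne ?_
  rw [← norm_pow, ← h, norm_one]

lemma qPochhammer_self_ne_zero {q : 𝕜} (hq : ‖q‖ < 1) (n : ℕ) : qPochhammer q q n ≠ 0 :=
  prod_ne_zero_iff.mpr fun i _ ↦ one_sub_mul_pow_self_ne_zero hq i

lemma gaussBinom_add_eq_div {q : 𝕜} (hq : ‖q‖ < 1) (m n : ℕ) :
    gaussBinom q (m + n) m =
      qPochhammer q q (m + n) / (qPochhammer q q m * qPochhammer q q n) := by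
  rw [eq_div_iff (mul_ne_zero (qPochhammer_self_ne_zero hq m) (qPochhammer_self_ne_zero hq n)),
    mul_comm, qPochhammer_mul_gaussBinom]

lemma summable_norm_mul_geometric (a : 𝕜) {q : 𝕜} (hq : ‖q‖ < 1) :
    Summable fun n : ℕ ↦ ‖-(a * q ^ n)‖ := by
  simpa only [norm_neg, norm_mul, norm_pow] using
    (summable_geometric_of_lt_one (norm_nonneg q) hq).mul_left ‖a‖

lemma summable_norm_pow_sq_mul_pow {z : 𝕜} (hz : ‖z‖ < 1) (y : 𝕜) :
    Summable fun n : ℕ ↦ ‖z ^ n ^ 2 * y ^ n‖ := by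
  have small : ∀ᶠ n : ℕ in atTop, ‖z ^ n * y‖ < 1 / 2 := by
    have lim := ((tendsto_pow_atTop_nhds_zero_of_norm_lt_one hz).mul_const y).norm
    rw [zero_mul, norm_zero] at lim
    exact lim.eventually_lt_const (by norm_num)
  refine .of_norm_bounded_eventually_nat summable_geometric_two ?_
  filter_upwards [small] with n hn
  rw [norm_norm, sq, pow_mul, ← mul_pow, norm_pow]
  exact pow_le_pow_left₀ (norm_nonneg _) hn.le n

lemma summable_norm_zpow_sq_mul_zpow {z : 𝕜} (hz : ‖z‖ < 1) (y : 𝕜) :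
    Summable fun k : ℤ ↦ ‖z ^ k ^ 2 * y ^ k‖ := by
  refine .of_nat_of_neg ?_ ?_
  · exact mod_cast summable_norm_pow_sq_mul_pow hz y
  · simp only [neg_sq, zpow_neg, ← inv_zpow]
    exact mod_cast summable_norm_pow_sq_mul_pow hz y⁻¹

variable [CompleteSpace 𝕜]

lemma multipliable_one_sub_mul_pow (a : 𝕜) {q : 𝕜} (hq : ‖q‖ < 1) :
    Multipliable fun n : ℕ ↦ 1 - a * q ^ n := by
  simpa only [sub_eq_add_neg] using
    multipliable_one_add_of_summable (summable_norm_mul_geometric a hq)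

lemma tendsto_qPochhammer (a : 𝕜) {q : 𝕜} (hq : ‖q‖ < 1) :
    Tendsto (qPochhammer a q) atTop (𝓝 (∏' n : ℕ, (1 - a * q ^ n))) :=
  (multipliable_one_sub_mul_pow a hq).tendsto_prod_tprod_nat

lemma tprod_one_sub_mul_pow_self_ne_zero {q : 𝕜} (hq : ‖q‖ < 1) :
    ∏' n : ℕ, (1 - q * q ^ n) ≠ 0 := by
  simp only [sub_eq_add_neg]
  refine tprod_one_add_ne_zero_of_summable (fun n ↦ ?_) (summable_norm_mul_geometric q hq)
  simpa only [sub_eq_add_neg] using one_sub_mul_pow_self_ne_zero hq n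

lemma tendsto_gaussBinom_add {ι : Type*} {l : Filter ι} {q : 𝕜} (hq : ‖q‖ < 1) {u v : ι → ℕ}
    (hu : Tendsto u l atTop) (hv : Tendsto v l atTop) :
    Tendsto (fun i ↦ gaussBinom q (u i + v i) (u i)) l (𝓝 (∏' n : ℕ, (1 - q * q ^ n))⁻¹) := by
  have lim := tendsto_qPochhammer q hq
  have ne_zero := tprod_one_sub_mul_pow_self_ne_zero hq
  have quotient := (lim.comp (hu.atTop_add_atTop hv)).div ((lim.comp hu).mul (lim.comp hv))
    (mul_ne_zero ne_zero ne_zero)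
  rw [div_mul_cancel_left₀ ne_zero] at quotient
  exact quotient.congr fun i ↦ (gaussBinom_add_eq_div hq (u i) (v i)).symm

lemma exists_norm_gaussBinom_le {q : 𝕜} (hq : ‖q‖ < 1) :
    ∃ C, ∀ n k, ‖gaussBinom q n k‖ ≤ C := by
  have lim := tendsto_qPochhammer q hq
  obtain ⟨A, hA⟩ := lim.norm.bddAbove_range
  obtain ⟨B, hB⟩ := (lim.inv₀ (tprod_one_sub_mul_pow_self_ne_zero hq)).norm.bddAbove_range
  replace hA n : ‖qPochhammer q q n‖ ≤ A := hA ⟨n, rfl⟩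
  replace hB n : ‖(qPochhammer q q n)⁻¹‖ ≤ B := hB ⟨n, rfl⟩
  have A_nonneg : 0 ≤ A := (norm_nonneg _).trans (hA 0)
  have B_nonneg : 0 ≤ B := (norm_nonneg _).trans (hB 0)
  refine ⟨A * (B * B), fun n k ↦ ?_⟩
  rcases lt_or_ge n k with h | h
  · rw [gaussBinom_eq_zero_of_lt q h, norm_zero]
    positivity
  · obtain ⟨m, rfl⟩ := Nat.exists_eq_add_of_le h
    rw [gaussBinom_add_eq_div hq, div_eq_mul_inv, mul_inv, norm_mul, norm_mul]
    gcongr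
    exacts [hA _, hB _, hB _]

end Limits

section TripleProduct

/-- `[2n, n + k]_q`, extended by zero to `|k| > n`: the coefficients of the finite form of the
triple product. -/
def centralGaussBinom {R : Type*} [CommSemiring R] (q : R) (n : ℕ) (k : ℤ) : R :=
  if k.natAbs ≤ n then gaussBinom q (n + n) (n + k).toNat else 0

lemma hasSum_centralGaussBinom_mul {K : Type*} [Field K] [TopologicalSpace K] {z y : K}
    (hz : z ≠ 0) (hy : y ≠ 0) (n : ℕ) :
    HasSum (fun k : ℤ ↦ centralGaussBinom (z ^ 2) n k * (z ^ k ^ 2 * y ^ k))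
      (qPochhammer (-(z * y)) (z ^ 2) n * qPochhammer (-(z * y⁻¹)) (z ^ 2) n) := by
  have reindex : ∑ k ∈ range (n + n + 1),
      gaussBinom (z ^ 2) (n + n) k * (z ^ ((k - n : ℤ) ^ 2) * y ^ (k - n : ℤ)) =
      ∑ k ∈ Icc (-n : ℤ) n, centralGaussBinom (z ^ 2) n k * (z ^ k ^ 2 * y ^ k) := by
    refine sum_bij' (fun k _ ↦ (k - n : ℤ)) (fun k _ ↦ (n + k).toNat)
      (by grind) (by grind) (by grind) (by grind) fun k hk ↦ ?_
    rw [centralGaussBinom, if_pos (by grind), add_sub_cancel, Int.toNat_natCast]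
  rw [qPochhammer_mul_qPochhammer_eq_sum_gaussBinom hz hy, reindex]
  refine hasSum_sum_of_ne_finset_zero fun k hk ↦ ?_
  rw [centralGaussBinom, if_neg (by grind), zero_mul]

variable {𝕜 : Type*} [NormedField 𝕜] [CompleteSpace 𝕜]

lemma tendsto_centralGaussBinom {q : 𝕜} (hq : ‖q‖ < 1) (k : ℤ) :
    Tendsto (fun n ↦ centralGaussBinom q n k) atTop (𝓝 (∏' n : ℕ, (1 - q * q ^ n))⁻¹) := by
  have shift (j : ℤ) : Tendsto (fun n : ℕ ↦ (n + j).toNat) atTop atTop :=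
    tendsto_atTop.2 fun b ↦ by
      filter_upwards [eventually_ge_atTop (b + j.natAbs)] with n hn
      lia
  refine (tendsto_gaussBinom_add hq (shift k) (shift (-k))).congr' ?_
  filter_upwards [eventually_ge_atTop k.natAbs] with n hn
  rw [centralGaussBinom, if_pos hn,
    show (n + k).toNat + (n + -k).toNat = n + n by lia]

lemma exists_norm_centralGaussBinom_le {q : 𝕜} (hq : ‖q‖ < 1) :
    ∃ C, ∀ n k, ‖centralGaussBinom q n k‖ ≤ C := by
  obtain ⟨C, hC⟩ := exists_norm_gaussBinom_le hq
  refine ⟨C, fun n k ↦ ?_⟩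
  unfold centralGaussBinom
  split_ifs
  · exact hC _ _
  · exact norm_zero.trans_le ((norm_nonneg _).trans (hC 0 0))

lemma inv_tprod_mul_tsum_zpow_sq_mul_zpow {z y : 𝕜} (hz : ‖z‖ < 1) (hz0 : z ≠ 0) (hy : y ≠ 0) :
    (∏' n : ℕ, (1 - z ^ 2 * (z ^ 2) ^ n))⁻¹ * ∑' k : ℤ, z ^ k ^ 2 * y ^ k =
      (∏' n : ℕ, (1 - -(z * y) * (z ^ 2) ^ n)) * ∏' n : ℕ, (1 - -(z * y⁻¹) * (z ^ 2) ^ n) := by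
  have hq : ‖z ^ 2‖ < 1 := norm_pow z 2 ▸ pow_lt_one₀ (norm_nonneg z) hz two_ne_zero
  obtain ⟨C, hC⟩ := exists_norm_centralGaussBinom_le hq
  have sums_tendsto := tendsto_tsum_of_dominated_convergence
    ((summable_norm_zpow_sq_mul_zpow hz y).mul_left C)
    (fun k ↦ (tendsto_centralGaussBinom hq k).mul_const (z ^ k ^ 2 * y ^ k))
    (.of_forall fun n k ↦
      (norm_mul_le _ _).trans (mul_le_mul_of_nonneg_right (hC n k) (norm_nonneg _)))
  simp only [(hasSum_centralGaussBinom_mul hz0 hy _).tsum_eq, tsum_mul_left] at sums_tendsto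
  exact tendsto_nhds_unique sums_tendsto
    ((tendsto_qPochhammer _ hq).mul (tendsto_qPochhammer _ hq))

/-- **Jacobi's triple product identity**. -/
theorem tsum_zpow_sq_mul_zpow_eq_tprod {z y : 𝕜} (hz : ‖z‖ < 1) (hy : y ≠ 0) :
    ∑' k : ℤ, z ^ k ^ 2 * y ^ k =
      ∏' n : ℕ, (1 - z ^ (2 * n + 2)) * (1 + z ^ (2 * n + 1) * y) *
        (1 + z ^ (2 * n + 1) * y⁻¹) := by
  rcases eq_or_ne z 0 with rfl | hz0
  · rw [tsum_eq_single 0 fun k hk ↦ by rw [zero_zpow _ (pow_ne_zero 2 hk), zero_mul]]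
    simp
  have hq : ‖z ^ 2‖ < 1 := norm_pow z 2 ▸ pow_lt_one₀ (norm_nonneg z) hz two_ne_zero
  have multipliable (a : 𝕜) := multipliable_one_sub_mul_pow a hq
  rw [← mul_inv_cancel_left₀ (tprod_one_sub_mul_pow_self_ne_zero hq) (∑' _, _),
    inv_tprod_mul_tsum_zpow_sq_mul_zpow hz hz0 hy, ← mul_assoc,
    ← (multipliable _).tprod_mul (multipliable _),
    ← ((multipliable _).mul (multipliable _)).tprod_mul (multipliable _)]
  refine tprod_congr fun n ↦ ?_
  ring

end TripleProduct

theorem sum_eq_prod_of_jacobi (q : ℝ) (hq0 : 0 < q) (hq1 : q < 1) :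
    (∑' k : ℤ, (-1 : ℝ) ^ k * q ^ ((2 * (k : ℝ) ^ 2 + (k : ℝ)) / 3)) =
      ∏' n : ℕ, ((1 - q ^ ((4 * ((n : ℝ) + 1)) / 3)) *
        (1 - q ^ ((4 * ((n : ℝ) + 1) - 1) / 3)) *
        (1 - q ^ ((4 * ((n : ℝ) + 1) - 3) / 3))) := by
  have hz : ‖q ^ (2 / 3 : ℝ)‖ < 1 := by
    rw [Real.norm_of_nonneg (by positivity)]
    exact Real.rpow_lt_one hq0.le hq1 (by norm_num)
  have hy : -q ^ (1 / 3 : ℝ) ≠ 0 := neg_ne_zero.mpr (by positivity)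
  have summand (k : ℤ) : (-1 : ℝ) ^ k * q ^ ((2 * (k : ℝ) ^ 2 + (k : ℝ)) / 3) =
      (q ^ (2 / 3 : ℝ)) ^ k ^ 2 * (-q ^ (1 / 3 : ℝ)) ^ k := by
    rw [neg_eq_neg_one_mul (q ^ _), mul_zpow, mul_left_comm, ← Real.rpow_mul_intCast hq0.le,
      ← Real.rpow_mul_intCast hq0.le, ← Real.rpow_add hq0]
    push_cast; ring_nf
  simp only [summand, tsum_zpow_sq_mul_zpow_eq_tprod hz hy]
  refine tprod_congr fun n ↦ ?_
  simp only [inv_neg, mul_neg, ← sub_eq_add_neg, ← Real.rpow_neg hq0.le,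
    ← Real.rpow_mul_natCast hq0.le, ← Real.rpow_add hq0]
  push_cast; ring_nf
end

section
/- For every real τ > 0, the Dedekind eta function satisfies η(i/τ) = √τ · η(iτ). -/
/-!
The eta function satisfies `η (-1 / z) = √z / √i * η z` on the upper half-plane: both sides have
the same logarithmic derivative, by the quasi-modularity of `E₂`, and they agree at `z = i`.
At `z = iτ` with `0 < re τ`, the arguments of `i` and `τ` add up to the argument of `iτ`, so the
principal square root splits as `√(iτ) = √i * √τ` and the factor `√i` cancels.
-/

open scoped Real

noncomputable def eta (z : ℂ) : ℂ :=
  Complex.exp (Real.pi * Complex.I * z / 12) *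
    ∏' n : ℕ, (1 - Complex.exp (2 * Real.pi * Complex.I * ((n : ℂ) + 1) * z))

theorem mul_cpow_of_arg_add_arg_mem_Ioc {x y : ℂ} (h : x.arg + y.arg ∈ Set.Ioc (-π) π) (s : ℂ) :
    (x * y) ^ s = x ^ s * y ^ s := by
  rcases eq_or_ne s 0 with rfl | hs
  · simp
  rcases eq_or_ne x 0 with rfl | hx
  · simp [hs]
  rcases eq_or_ne y 0 with rfl | hy
  · simp [hs]
  rw [Complex.cpow_def_of_ne_zero (mul_ne_zero hx hy), Complex.cpow_def_of_ne_zero hx,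
    Complex.cpow_def_of_ne_zero hy, Complex.log_mul hx hy h, add_mul, Complex.exp_add]

theorem sqrt_I_mul_of_arg_le_pi_div_two {w : ℂ} (hw : w.arg ≤ π / 2) :
    Complex.sqrt (Complex.I * w) = Complex.sqrt Complex.I * Complex.sqrt w := by
  refine mul_cpow_of_arg_add_arg_mem_Ioc ?_ _
  rw [Complex.arg_I]
  constructor <;> linarith [w.neg_pi_lt_arg, Real.pi_pos]

theorem eta_eq_modularForm_eta (z : ℂ) : eta z = ModularForm.eta z := by
  have h_exp : π * Complex.I * z / 12 = 2 * π * Complex.I * z / (24 : ℝ) := by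
    push_cast
    ring
  simp only [eta, ModularForm.eta, Function.Periodic.qParam, ModularForm.eta_q_eq_cexp, h_exp]

theorem eta_neg_one_div {z : ℂ} (hz : 0 < z.im) :
    eta (-1 / z) = (Complex.sqrt Complex.I)⁻¹ * (Complex.sqrt z * eta z) := by
  rw [eta_eq_modularForm_eta, eta_eq_modularForm_eta]
  exact ModularForm.eta_comp_eq_csqrt_I_inv hz

theorem eta_modular_general (τ : ℂ) (hτ : 0 < τ.re) :
    eta (Complex.I / τ) = Complex.sqrt τ * eta (Complex.I * τ) := by
  have h_inv : Complex.I / τ = -1 / (Complex.I * τ) := by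
    rw [← div_div, neg_div, one_div, Complex.inv_I, neg_neg]
  have h_im : 0 < (Complex.I * τ).im := by rwa [Complex.I_mul_im]
  have h_arg : τ.arg ≤ π / 2 := Complex.arg_le_pi_div_two_iff.2 (.inl hτ.le)
  have h_sqrt_I : Complex.sqrt Complex.I ≠ 0 := by simp [Complex.sqrt]
  rw [h_inv, eta_neg_one_div h_im, sqrt_I_mul_of_arg_le_pi_div_two h_arg, mul_assoc,
    inv_mul_cancel_left₀ h_sqrt_I]

theorem eta_modular (τ : ℝ) (hτ : 0 < τ) :
    eta (Complex.I / (τ : ℂ)) = (Real.sqrt τ : ℂ) * eta (Complex.I * (τ : ℂ)) := by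
  rw [eta_modular_general τ hτ, Complex.sqrt_of_nonneg (by exact_mod_cast hτ.le), Complex.ofReal_re]
end
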